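/- arXiv:2510.12046 — 2 statements merged into one kernel-verified Lean document; each statement's English description precedes it below -/
import Mathlib

section
/- For every nonnegative integer n, the number of separable signed permutations in B_n equals the n-th large Schröder number r_n, where r_0 = 1 and r_{m+1} = r_m + Σ_{k=0}^{m} r_k r_{m−k} for m ≥ 0. Equivalently, #K(B_n) = #K(S_{n+1}). -/
/-!
Both counts come from cutting a word into its direct-sum components.

A signed permutation is separable exactly when letters of opposite sign occur in increasing order of
absolute value and the absolute values avoid `3142` and `2413` (`isSepB_iff`). This condition can be
checked on the two summands of a direct sum separately, so splitting off the first component gives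
`b (n+1) = ∑ I' (k+1) * b (n-k)`, where `I'` counts the sum-irreducible words of the class; the same
recurrence holds for separable permutations, with counts `s` and `I` (`card_cls_succ`).

A sum-irreducible separable signed permutation has constant sign, because the end of its first
constant-sign run would otherwise be a cut; hence `I' k = 2 * I k` for `k ≥ 1` (`card_irr_signed`).
A separable permutation with at least two letters is a direct sum or a skew sum (`dec_or_dec`), never
both, and reversal exchanges the two cases; hence `s k = 2 * I k` for `k ≥ 2`
(`card_cls_eq_two_mul`). Substituting into the two recurrences turns both into the Schröder
recurrence, giving `s (n+1) = r n` and `b n = r n` (`schroeder_of_recurrences`).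
-/

namespace SepPaperFormal

noncomputable section

open Polynomial

def st (a : List ℤ) : List ℤ :=
  a.map (fun x => ((a.filter (fun y => decide (y < x))).length : ℤ) + 1)

def sts (a : List ℤ) : List ℤ :=
  a.map (fun x => x.sign * (((a.filter (fun y => decide (|y| < |x|))).length : ℤ) + 1))

def IsSignedPerm (w : List ℤ) : Prop :=
  (w.map Int.natAbs).Perm (List.range' 1 w.length)

def ContainsB (w u : List ℤ) : Prop := ∃ s : List ℤ, s.Sublist w ∧ sts s = u

def ContainsA (w u : List ℤ) : Prop := ∃ s : List ℤ, s.Sublist w ∧ st s = u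

def IsSepB (w : List ℤ) : Prop :=
  IsSignedPerm w ∧
    ¬ ContainsB w [-2, 1] ∧ ¬ ContainsB w [2, -1] ∧
    ¬ ContainsB w [3, 1, 4, 2] ∧ ¬ ContainsB w [2, 4, 1, 3] ∧
    ¬ ContainsB w [-3, -1, -4, -2] ∧ ¬ ContainsB w [-2, -4, -1, -3]

def IsSepA (w : List ℤ) : Prop :=
  IsSignedPerm w ∧ (∀ x ∈ w, 0 < x) ∧
    ¬ ContainsA w [3, 1, 4, 2] ∧ ¬ ContainsA w [2, 4, 1, 3]

def oplus (u v : List ℤ) : List ℤ :=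
  u ++ v.map (fun x => x + x.sign * (u.length : ℤ))

def ominus (u v : List ℤ) : List ℤ :=
  u.map (fun x => x + x.sign * (v.length : ℤ)) ++ v

def AllSameSign (l : List ℤ) : Prop := (∀ x ∈ l, 0 < x) ∨ (∀ x ∈ l, x < 0)

def OppSign (a b : List ℤ) : Prop := ∀ x ∈ a, ∀ y ∈ b, x * y < 0

-- blocks for statement 3
def blockOf (w : List ℤ) (q : List ℕ) (i : ℕ) : List ℤ :=
  (w.drop q[i]!).take (q[i+1]! - q[i]!)

def cutSeq (w : List ℤ) (cuts : List ℕ) : List ℕ := 0 :: (cuts ++ [w.length])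

def GoodDecomp (w : List ℤ) (cuts : List ℕ) : Prop :=
  List.Chain' (· < ·) (cutSeq w cuts) ∧
  w = List.foldl oplus (blockOf w (cutSeq w cuts) 0)
        ((List.range cuts.length).map (fun i => sts (blockOf w (cutSeq w cuts) (i + 1)))) ∧
  IsSepB (blockOf w (cutSeq w cuts) 0) ∧
  (∀ i, 1 ≤ i → i ≤ cuts.length → IsSepB (sts (blockOf w (cutSeq w cuts) i))) ∧
  (∀ j, j ≤ cuts.length → AllSameSign (blockOf w (cutSeq w cuts) j)) ∧
  (∀ i, 1 ≤ i → i ≤ cuts.length →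
    OppSign (blockOf w (cutSeq w cuts) (i - 1)) (blockOf w (cutSeq w cuts) i))

-- statement 4
inductive InC : List ℤ → Prop
  | one : InC [1]
  | negone : InC [-1]
  | dsum (u v : List ℤ) : InC u → InC v → InC (oplus u v)
  | ssum (u v : List ℤ) : InC u → InC v → AllSameSign (u ++ v) → InC (ominus u v)

-- the map φₙ as a relation
inductive PhiRel : List ℤ → List ℤ → Prop
  | base : PhiRel [1] []
  | gasc (w u : List ℤ) (p : ℕ) (hp1 : 1 ≤ p) (hp2 : p < w.length)
      (h : ∀ i j, i < p → p ≤ j → j < w.length → w[i]! < w[j]!)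
      (ih : PhiRel (w.take p) u) :
      PhiRel w (oplus u (st (w.drop p)))
  | gdes (w u : List ℤ) (p : ℕ) (hp1 : 1 ≤ p) (hp2 : p < w.length)
      (h : ∀ i j, i < p → p ≤ j → j < w.length → w[j]! < w[i]!)
      (ih : PhiRel (st (w.take p)) u) :
      PhiRel w (oplus u ((w.drop p).map (fun x => x - ((w.length - p : ℕ) : ℤ) - 1)))

-- the map ψₙ as a relation
inductive PsiRel : List ℤ → List ℤ → Prop
  | base : PsiRel [] [1]
  | pos (w u : List ℤ) (p : ℕ) (hp : p < w.length)
      (hdec : w = oplus (w.take p) (sts (w.drop p)))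
      (hsign : AllSameSign (w.drop p))
      (hlast : 0 < w[w.length - 1]!)
      (ih : PsiRel (w.take p) u) :
      PsiRel w (oplus u (sts (w.drop p)))
  | neg (w u : List ℤ) (p : ℕ) (hp : p < w.length)
      (hdec : w = oplus (w.take p) (sts (w.drop p)))
      (hsign : AllSameSign (w.drop p))
      (hlast : w[w.length - 1]! < 0)
      (ih : PsiRel (w.take p) u) :
      PsiRel w (ominus u ((sts (w.drop p)).map (fun x => x + ((w.length - p : ℕ) : ℤ) + 1)))

-- descent statistics
def DesB (w : List ℤ) : Finset ℕ :=
  (Finset.range w.length).filter (fun i => (if i = 0 then (0 : ℤ) else w[i-1]!) > w[i]!)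

def DDesB (w : List ℤ) : Finset ℕ :=
  (Finset.range w.length).filter (fun i =>
    (i = 0 ∨ (if i - 1 = 0 then (0 : ℤ) else w[i-2]!) > (if i = 0 then (0 : ℤ) else w[i-1]!)) ∧
    (if i = 0 then (0 : ℤ) else w[i-1]!) > w[i]!)

def DesA (w : List ℤ) : Finset ℕ :=
  (Finset.range w.length).filter (fun i => 1 ≤ i ∧ w[i-1]! > w[i]!)

def DDesA (w : List ℤ) : Finset ℕ :=
  (Finset.range w.length).filter (fun i => 1 ≤ i ∧
    (i = 1 ∨ w[i-2]! > w[i-1]!) ∧ w[i-1]! > w[i]!)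

-- inversions, negatives, negative sum pairs (0-based index sets)
def InvF (w : List ℤ) : Finset (ℕ × ℕ) :=
  (Finset.range w.length ×ˢ Finset.range w.length).filter
    (fun p => p.1 < p.2 ∧ w[p.2]! < w[p.1]!)

def NegF (w : List ℤ) : Finset ℕ :=
  (Finset.range w.length).filter (fun i => w[i]! < 0)

def NspF (w : List ℤ) : Finset (ℕ × ℕ) :=
  (Finset.range w.length ×ˢ Finset.range w.length).filter
    (fun p => p.1 < p.2 ∧ w[p.1]! + w[p.2]! < 0)

/-- Left weak order on `S_n` (combinatorial characterization). -/
def leS (u v : List ℤ) : Prop := InvF u ⊆ InvF v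

/-- Left weak order on `B_n` (combinatorial characterization). -/
def leB (u v : List ℤ) : Prop := InvF u ⊆ InvF v ∧ NegF u ⊆ NegF v ∧ NspF u ⊆ NspF v

/-- Coxeter length in type `B`. -/
def lenB (w : List ℤ) : ℕ := (NegF w).card + (InvF w).card + (NspF w).card

/-- Coxeter length in type `A`. -/
def lenS (w : List ℤ) : ℕ := (InvF w).card

def IsPermW (w : List ℤ) : Prop := IsSignedPerm w ∧ ∀ x ∈ w, 0 < x

/-- Rank generating function of the principal lower ideal `Λ_w^B`. -/
def FLamB (w : List ℤ) : Polynomial ℚ :=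
  ∑ᶠ u ∈ {u : List ℤ | u.length = w.length ∧ IsSignedPerm u ∧ leB u w},
    (X : Polynomial ℚ) ^ lenB u

/-- Rank generating function of the principal upper ideal `V_w^B`. -/
def FVB (w : List ℤ) : Polynomial ℚ :=
  ∑ᶠ u ∈ {u : List ℤ | u.length = w.length ∧ IsSignedPerm u ∧ leB w u},
    (X : Polynomial ℚ) ^ lenB u

/-- Rank generating function of the principal lower ideal `Λ_w^S`. -/
def FLamS (w : List ℤ) : Polynomial ℚ :=
  ∑ᶠ u ∈ {u : List ℤ | u.length = w.length ∧ IsPermW u ∧ leS u w},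
    (X : Polynomial ℚ) ^ lenS u

/-- Rank generating function of the principal upper ideal `V_w^S`. -/
def FVS (w : List ℤ) : Polynomial ℚ :=
  ∑ᶠ u ∈ {u : List ℤ | u.length = w.length ∧ IsPermW u ∧ leS w u},
    (X : Polynomial ℚ) ^ lenS u

/-- `[i] = 1 + q + ⋯ + q^{i-1}`. -/
def qint (i : ℕ) : Polynomial ℚ := ∑ j ∈ Finset.range i, (X : Polynomial ℚ) ^ j

/-- `[m]! = [1][2]⋯[m]`. -/
def qfact (m : ℕ) : Polynomial ℚ := ∏ i ∈ Finset.range m, qint (i + 1)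

-- separating trees
inductive STree where
  | leaf : STree
  | node : Bool → STree → STree → STree

def numLeaves : STree → ℕ
  | .leaf => 1
  | .node _ l r => numLeaves l + numLeaves r

def Decomp (w : List ℤ) (p : ℕ) : Prop :=
  (w = oplus (w.take p) (sts (w.drop p)) ∧ IsSepB (w.take p) ∧ IsSepB (sts (w.drop p)) ∧
    AllSameSign (w.drop p)) ∨
  (w = ominus (sts (w.take p)) (w.drop p) ∧ IsSepB (sts (w.take p)) ∧ IsSepB (w.drop p) ∧
    AllSameSign (w.drop p))

/-- `IsSepTree w T`: `T` is the (shape of the) separating tree of the separable signed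
permutation `w`, where internal nodes labeled `true` are `⊕`-nodes and those labeled
`false` are `⊖`-nodes, and the separating index is chosen largest possible. -/
inductive IsSepTree : List ℤ → STree → Prop
  | leaf (x : ℤ) : IsSepTree [x] .leaf
  | nodeA (w : List ℤ) (p : ℕ) (l r : STree)
      (hp1 : 1 ≤ p) (hp2 : p < w.length)
      (hmax : ∀ q, p < q → q < w.length → ¬ Decomp w q)
      (hdec : w = oplus (w.take p) (sts (w.drop p)))
      (h1 : IsSepB (w.take p)) (h2 : IsSepB (sts (w.drop p)))
      (hsgn : AllSameSign (w.drop p))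
      (hl : IsSepTree (w.take p) l) (hr : IsSepTree (sts (w.drop p)) r) :
      IsSepTree w (.node (decide (w[p-1]! < w[p]!)) l r)
  | nodeB (w : List ℤ) (p : ℕ) (l r : STree)
      (hp1 : 1 ≤ p) (hp2 : p < w.length)
      (hmax : ∀ q, p < q → q < w.length → ¬ Decomp w q)
      (hdec : w = ominus (sts (w.take p)) (w.drop p))
      (h1 : IsSepB (sts (w.take p))) (h2 : IsSepB (w.drop p))
      (hsgn : AllSameSign (w.drop p))
      (hl : IsSepTree (sts (w.take p)) l) (hr : IsSepTree (w.drop p) r) :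
      IsSepTree w (.node (decide (w[p-1]! < w[p]!)) l r)

/-- Multiset of leaf-counts `N(V)` over internal `⊕`-nodes `V` whose parent is a
`⊖`-node (the root, whose parent label is `none`, is excluded): the set `S⁺(w)`. -/
def plusNodes : STree → Option Bool → Multiset ℕ
  | .leaf, _ => 0
  | .node b l r, parent =>
      (if b = true ∧ parent = some false then ({numLeaves (.node b l r)} : Multiset ℕ) else 0)
        + plusNodes l (some b) + plusNodes r (some b)

/-- Multiset of leaf-counts `N(V)` over internal `⊖`-nodes `V` whose parent is a
`⊕`-node (root excluded): the set `S⁻(w)`. -/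
def minusNodes : STree → Option Bool → Multiset ℕ
  | .leaf, _ => 0
  | .node b l r, parent =>
      (if b = false ∧ parent = some true then ({numLeaves (.node b l r)} : Multiset ℕ) else 0)
        + minusNodes l (some b) + minusNodes r (some b)

/-- `∏_{m ∈ s} [m]!`. -/
def qfactProd (s : Multiset ℕ) : Polynomial ℚ := (s.map qfact).prod


/-! ### Separable words are direct sums or skew sums -/

/-- The word `w`, read through the key `f`, contains neither `3142` nor `2413`. Words are kept
unnormalized: only the relative order of the keys matters. -/
def Avoid (f : ℤ → ℤ) (w : List ℤ) : Prop :=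
  ∀ p q r s, [p, q, r, s].Sublist w →
    ¬ (f q < f s ∧ f s < f p ∧ f p < f r) ∧ ¬ (f r < f p ∧ f p < f s ∧ f s < f q)

/-- `w` is a direct sum of two nonempty words with respect to the key `f`. With the key `-f` this
says that `w` is a skew sum with respect to `f`. -/
def Dec (f : ℤ → ℤ) (w : List ℤ) : Prop :=
  ∃ a b, a ≠ [] ∧ b ≠ [] ∧ w = a ++ b ∧ ∀ x ∈ a, ∀ y ∈ b, f x < f y

lemma Avoid.neg {f : ℤ → ℤ} {w : List ℤ} (h : Avoid f w) : Avoid (-f) w := by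
  intro p q r s hs
  have := h p q r s hs
  simp only [Pi.neg_apply, neg_lt_neg_iff]
  tauto

lemma Avoid.sublist {f : ℤ → ℤ} {v w : List ℤ} (h : Avoid f w) (hv : v.Sublist w) : Avoid f v :=
  fun p q r s hs => h p q r s (hs.trans hv)

lemma avoid_append {f : ℤ → ℤ} {a b : List ℤ} (hab : ∀ x ∈ a, ∀ y ∈ b, f x < f y) :
    Avoid f (a ++ b) ↔ Avoid f a ∧ Avoid f b := by
  refine ⟨fun h => ⟨h.sublist (List.sublist_append_left a b),
    h.sublist (List.sublist_append_right a b)⟩, ?_⟩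
  rintro ⟨ha, hb⟩ p q r s hs
  obtain ⟨l₁, l₂, e, h₁, h₂⟩ := List.sublist_append_iff.1 hs
  have key : ∀ x ∈ l₁, ∀ y ∈ l₂, f x < f y := fun x hx y hy =>
    hab x (h₁.subset hx) y (h₂.subset hy)
  rcases l₁ with _ | ⟨p', _ | ⟨q', _ | ⟨r', _ | ⟨s', _ | ⟨t', l⟩⟩⟩⟩⟩
  · simp only [List.nil_append] at e
    subst e
    exact hb _ _ _ _ h₂
  · simp only [List.cons_append, List.nil_append, List.cons.injEq] at e
    obtain ⟨rfl, rfl⟩ := e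
    simp at key
    omega
  · simp only [List.cons_append, List.nil_append, List.cons.injEq] at e
    obtain ⟨rfl, rfl, rfl⟩ := e
    simp at key
    omega
  · simp only [List.cons_append, List.nil_append, List.cons.injEq] at e
    obtain ⟨rfl, rfl, rfl, rfl⟩ := e
    simp at key
    omega
  · simp only [List.cons_append, List.nil_append, List.cons.injEq] at e
    obtain ⟨rfl, rfl, rfl, rfl, rfl⟩ := e
    exact ha _ _ _ _ h₁
  · have := congrArg List.length e
    simp at this

lemma avoid_map {f g h : ℤ → ℤ} (hfg : ∀ x y, f (g x) < f (g y) ↔ h x < h y) {w : List ℤ} :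
    Avoid f (w.map g) ↔ Avoid h w := by
  constructor
  · intro H p q r s hs
    simpa only [hfg] using H _ _ _ _ (hs.map g)
  · intro H p q r s hs
    obtain ⟨l, hl, e⟩ := List.sublist_map_iff.1 hs
    rcases l with _ | ⟨p', _ | ⟨q', _ | ⟨r', _ | ⟨s', _ | ⟨t', l⟩⟩⟩⟩⟩ <;> simp at e
    obtain ⟨rfl, rfl, rfl, rfl⟩ := e
    simpa only [hfg] using H _ _ _ _ hl

lemma avoid_reverse {f : ℤ → ℤ} {w : List ℤ} (h : Avoid f w) : Avoid f w.reverse := by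
  intro p q r s hs
  have := h s r q p (by simpa using List.reverse_sublist.2 hs)
  tauto

lemma dec_map {f g h : ℤ → ℤ} (hfg : ∀ x y, f (g x) < f (g y) ↔ h x < h y) {w : List ℤ} :
    Dec f (w.map g) ↔ Dec h w := by
  constructor
  · rintro ⟨a, b, ha, hb, e, hab⟩
    obtain ⟨a', b', rfl, rfl, rfl⟩ := List.map_eq_append_iff.1 e
    refine ⟨a', b', by simpa using ha, by simpa using hb, rfl, fun x hx y hy => ?_⟩
    exact (hfg x y).1 (hab _ (List.mem_map_of_mem hx) _ (List.mem_map_of_mem hy))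
  · rintro ⟨a, b, ha, hb, rfl, hab⟩
    refine ⟨a.map g, b.map g, by simpa using ha, by simpa using hb, by simp, ?_⟩
    simp only [List.mem_map]
    rintro _ ⟨x, hx, rfl⟩ _ ⟨y, hy, rfl⟩
    exact (hfg x y).2 (hab x hx y hy)

lemma dec_reverse {f : ℤ → ℤ} {w : List ℤ} : Dec f w.reverse ↔ Dec (-f) w := by
  constructor
  · rintro ⟨a, b, ha, hb, e, hab⟩
    refine ⟨b.reverse, a.reverse, by simpa using hb, by simpa using ha, ?_, ?_⟩
    · rw [← List.reverse_append, ← e, List.reverse_reverse]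
    · intro x hx y hy
      simpa using hab y (by simpa using hy) x (by simpa using hx)
  · rintro ⟨a, b, ha, hb, rfl, hab⟩
    refine ⟨b.reverse, a.reverse, by simpa using hb, by simpa using ha, by simp, ?_⟩
    intro x hx y hy
    simpa using hab y (by simpa using hy) x (by simpa using hx)

/-- Comparing the first and the last letter shows that no word is both a direct sum and a skew
sum. -/
lemma not_dec_both {f : ℤ → ℤ} {w : List ℤ} (h₁ : Dec f w) (h₂ : Dec (-f) w) : False := by
  obtain ⟨a, b, ha, hb, rfl, hab⟩ := h₁
  obtain ⟨c, d, hc, hd, e, hcd⟩ := h₂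
  have h1 : a.head ha = c.head hc := by
    have : (a ++ b).head? = (c ++ d).head? := by rw [e]
    simpa [List.head?_append, List.head?_eq_some_head ha, List.head?_eq_some_head hc] using this
  have h2 : b.getLast hb = d.getLast hd := by
    have : (a ++ b).getLast? = (c ++ d).getLast? := by rw [e]
    simpa [List.getLast?_append, List.getLast?_eq_some_getLast hb,
      List.getLast?_eq_some_getLast hd] using this
  have h3 := hab _ (List.head_mem ha) _ (List.getLast_mem hb)
  have h4 := hcd _ (List.head_mem hc) _ (List.getLast_mem hd)
  simp only [Pi.neg_apply] at h4
  rw [h1, h2] at h3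
  omega

/-- Every nonempty word has a first direct-sum component. -/
lemma exists_first (f : ℤ → ℤ) : ∀ n (w : List ℤ), w.length ≤ n → w ≠ [] →
    ∃ a b, a ≠ [] ∧ w = a ++ b ∧ ¬ Dec f a ∧ ∀ x ∈ a, ∀ y ∈ b, f x < f y := by
  intro n
  induction n with
  | zero => intro w h hw; simp at h; contradiction
  | succ n ih =>
    intro w h hw
    by_cases hd : Dec f w
    · obtain ⟨a, b, ha, hb, rfl, hab⟩ := hd
      have := List.length_pos_iff.2 hb
      obtain ⟨a₁, a₂, h1, rfl, h3, h4⟩ := ih a (by simp at h; omega) ha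
      refine ⟨a₁, a₂ ++ b, h1, by simp, h3, ?_⟩
      intro x hx y hy
      rcases List.mem_append.1 hy with hy | hy
      · exact h4 x hx y hy
      · exact hab x (by simp [hx]) y hy
    · exact ⟨w, [], hw, by simp, hd, by simp⟩

/-- Every nonempty word has a last direct-sum component. -/
lemma exists_last (f : ℤ → ℤ) {w : List ℤ} (hw : w ≠ []) :
    ∃ a b, b ≠ [] ∧ w = a ++ b ∧ ¬ Dec f b ∧ ∀ x ∈ a, ∀ y ∈ b, f x < f y := by
  obtain ⟨b, a, hb, e, hd, hab⟩ := exists_first (-f) _ w.reverse le_rfl (by simpa using hw)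
  refine ⟨a.reverse, b.reverse, by simpa using hb, ?_, fun h => hd (dec_reverse.1 h), ?_⟩
  · rw [← List.reverse_append, ← e, List.reverse_reverse]
  · intro x hx y hy
    simpa using hab y (by simpa using hy) x (by simpa using hx)

/-- Induction step for `dec_or_dec`: prepend `x` to a direct sum whose last component is `b`. If
`x` is neither below nor above all of `b`, then `b` is a skew sum and `x` together with an earlier
letter and one letter from each part of `b` forms the pattern `3142`. -/
lemma dec_cons {f : ℤ → ℤ} {x : ℤ} {t : List ℤ} (hn : ((x :: t).map f).Nodup)
    (hav : Avoid f (x :: t)) (hd : Dec f t)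
    (ih : ∀ b : List ℤ, b.Sublist t → 2 ≤ b.length → Dec f b ∨ Dec (-f) b) :
    Dec f (x :: t) ∨ Dec (-f) (x :: t) := by
  have ht : t ≠ [] := by
    rintro rfl
    obtain ⟨a, b, ha, hb, e, -⟩ := hd
    simp at e
    exact ha e.1
  obtain ⟨a, b, hb, e, hirr, hab⟩ := exists_last f ht
  have ha : a ≠ [] := by
    rintro rfl
    simp only [List.nil_append] at e
    exact hirr (e ▸ hd)
  subst e
  have hx : ∀ y ∈ a ++ b, f y ≠ f x := by
    rw [List.map_cons, List.nodup_cons] at hn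
    intro y hy e
    exact hn.1 (e ▸ List.mem_map_of_mem hy)
  by_cases h1 : ∀ y ∈ b, f x < f y
  · refine Or.inl ⟨x :: a, b, by simp, hb, by simp, ?_⟩
    intro z hz y hy
    rcases List.mem_cons.1 hz with rfl | hz
    · exact h1 y hy
    · exact hab z hz y hy
  push Not at h1
  obtain ⟨y, hy, hyx⟩ := h1
  have hyx : f y < f x := lt_of_le_of_ne hyx (hx y (by simp [hy]))
  by_cases h2 : ∀ z ∈ b, f z < f x
  · refine Or.inr ⟨[x], a ++ b, by simp, by simp [hb], by simp, ?_⟩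
    intro z hz u hu
    obtain rfl : z = x := by simpa using hz
    simp only [Pi.neg_apply, neg_lt_neg_iff]
    rcases List.mem_append.1 hu with hu | hu
    · exact (hab u hu y hy).trans hyx
    · exact h2 u hu
  push Not at h2
  obtain ⟨z, hz, hzx⟩ := h2
  have hzx : f x < f z := lt_of_le_of_ne hzx (hx z (by simp [hz])).symm
  exfalso
  have hlen : 2 ≤ b.length := by
    rcases b with _ | ⟨u, _ | ⟨v, b⟩⟩
    · simp at hy
    · obtain rfl : y = u := by simpa using hy
      obtain rfl : z = y := by simpa using hz
      omega
    · simp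
  rcases ih b (List.sublist_append_right a b) hlen with h | h
  · exact hirr h
  obtain ⟨c, d, hc, hdn, rfl, hcd⟩ := h
  simp only [Pi.neg_apply, neg_lt_neg_iff] at hcd
  obtain ⟨c', hc', hxc⟩ : ∃ c' ∈ c, f x < f c' := by
    rcases List.mem_append.1 hz with hz | hz
    · exact ⟨z, hz, hzx⟩
    · obtain ⟨c', hc'⟩ := List.exists_mem_of_ne_nil c hc
      exact ⟨c', hc', hzx.trans (hcd c' hc' z hz)⟩
  obtain ⟨d', hd', hdx⟩ : ∃ d' ∈ d, f d' < f x := by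
    rcases List.mem_append.1 hy with hy | hy
    · obtain ⟨d', hd'⟩ := List.exists_mem_of_ne_nil d hdn
      exact ⟨d', hd', (hcd y hy d' hd').trans hyx⟩
    · exact ⟨y, hy, hyx⟩
  obtain ⟨a', ha'⟩ := List.exists_mem_of_ne_nil a ha
  have hs : [x, a', c', d'].Sublist (x :: (a ++ (c ++ d))) := by
    refine List.Sublist.cons_cons x ?_
    exact (List.singleton_sublist.2 ha').append
      ((List.singleton_sublist.2 hc').append (List.singleton_sublist.2 hd'))
  exact (hav _ _ _ _ hs).1 ⟨hab a' ha' d' (by simp [hd']), hdx, hxc⟩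

/-- A separable word with at least two letters is a direct sum or a skew sum. -/
lemma dec_or_dec : ∀ n (f : ℤ → ℤ) (w : List ℤ), w.length ≤ n → 2 ≤ w.length →
    (w.map f).Nodup → Avoid f w → Dec f w ∨ Dec (-f) w := by
  intro n
  induction n with
  | zero => intro f w h1 h2; omega
  | succ n ih =>
    intro f w h1 h2 hn hav
    rcases w with _ | ⟨x, t⟩
    · simp at h2
    simp only [List.length_cons] at h1 h2
    have hsub : ∀ g : ℤ → ℤ, ((x :: t).map g).Nodup → Avoid g (x :: t) →
        ∀ b : List ℤ, b.Sublist t → 2 ≤ b.length → Dec g b ∨ Dec (-g) b := by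
      intro g hg hgav b hb hlb
      have hb' : b.Sublist (x :: t) := hb.trans (List.sublist_cons_self x t)
      exact ih g b (hb.length_le.trans (by omega)) hlb (hg.sublist (hb'.map g))
        (hgav.sublist hb')
    rcases t with _ | ⟨y, _ | ⟨z, t⟩⟩
    · simp at h2
    · have hxy : f x ≠ f y := by simpa using hn
      rcases lt_or_gt_of_ne hxy with h | h
      · exact Or.inl ⟨[x], [y], by simp, by simp, by simp, by simpa using h⟩
      · exact Or.inr ⟨[x], [y], by simp, by simp, by simp, by simpa using h⟩
    · have hn' : ((x :: y :: z :: t).map (-f)).Nodup := by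
        have : (x :: y :: z :: t).map (-f) = ((x :: y :: z :: t).map f).map (fun u => -u) := by
          simp
        rw [this]
        exact hn.map neg_injective
      rcases hsub f hn hav _ (List.Sublist.refl _) (by simp) with h | h
      · exact dec_cons hn hav h (hsub f hn hav)
      · have := dec_cons hn' hav.neg h (hsub (-f) hn' hav.neg)
        rw [neg_neg] at this
        exact this.symm

/-! ### Direct sums of signed permutations -/

/-- Moves every letter `k` away from zero; this is the shift in the second summand of `oplus`. -/
def shift (k : ℕ) (x : ℤ) : ℤ := x + x.sign * k

/-- Inverse of `shift` on letters of absolute value greater than `k`. -/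
def unshift (k : ℕ) (x : ℤ) : ℤ := x - x.sign * k

lemma shift_of_pos {k : ℕ} {x : ℤ} (h : 0 < x) : shift k x = x + k := by
  simp [shift, Int.sign_eq_one_of_pos h]

lemma shift_of_neg {k : ℕ} {x : ℤ} (h : x < 0) : shift k x = x - k := by
  simp [shift, Int.sign_eq_neg_one_of_neg h]
  ring

lemma shift_zero (k : ℕ) : shift k 0 = 0 := by simp [shift]

lemma sign_shift (k : ℕ) (x : ℤ) : (shift k x).sign = x.sign := by
  rcases lt_trichotomy x 0 with h | rfl | h
  · rw [shift_of_neg h, Int.sign_eq_neg_one_of_neg h, Int.sign_eq_neg_one_of_neg (by omega)]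
  · rw [shift_zero]
  · rw [shift_of_pos h, Int.sign_eq_one_of_pos h, Int.sign_eq_one_of_pos (by omega)]

lemma natAbs_shift {k : ℕ} {x : ℤ} (hx : x ≠ 0) : (shift k x).natAbs = k + x.natAbs := by
  rcases lt_or_gt_of_ne hx with h | h
  · rw [shift_of_neg h]; omega
  · rw [shift_of_pos h]; omega

lemma abs_shift_lt (k : ℕ) (x y : ℤ) : |shift k x| < |shift k y| ↔ |x| < |y| := by
  simp only [Int.abs_eq_natAbs]
  by_cases hx : x = 0
  · by_cases hy : y = 0
    · simp [hx, hy]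
    · have := natAbs_shift (k := k) hy
      rw [hx, shift_zero]
      omega
  · have h1 := natAbs_shift (k := k) hx
    by_cases hy : y = 0
    · rw [hy, shift_zero]
      omega
    · have := natAbs_shift (k := k) hy
      omega

lemma shift_injective (k : ℕ) : Function.Injective (shift k) := by
  intro x y h
  rcases lt_trichotomy x 0 with hx | rfl | hx <;> rcases lt_trichotomy y 0 with hy | rfl | hy <;>
    simp only [shift_of_pos, shift_of_neg, shift_zero, *] at h <;> omega

lemma shift_unshift {k : ℕ} {x : ℤ} (h : k < x.natAbs) : shift k (unshift k x) = x := by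
  rcases lt_or_ge x 0 with hx | hx
  · have : unshift k x = x + k := by simp [unshift, Int.sign_eq_neg_one_of_neg hx]
    rw [this, shift_of_neg (by omega)]
    ring
  · have : unshift k x = x - k := by
      simp [unshift, Int.sign_eq_one_of_pos (show 0 < x by omega)]
    rw [this, shift_of_pos (by omega)]
    ring

lemma IsSignedPerm.natAbs_mem {w : List ℤ} (h : IsSignedPerm w) {x : ℤ} (hx : x ∈ w) :
    1 ≤ x.natAbs ∧ x.natAbs ≤ w.length := by
  have := h.subset (List.mem_map_of_mem hx)
  simp only [List.mem_range'_1] at this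
  omega

lemma IsSignedPerm.ne_zero {w : List ℤ} (h : IsSignedPerm w) {x : ℤ} (hx : x ∈ w) : x ≠ 0 := by
  have := h.natAbs_mem hx
  omega

lemma IsSignedPerm.nodup {w : List ℤ} (h : IsSignedPerm w) : (w.map Int.natAbs).Nodup :=
  h.nodup_iff.2 List.nodup_range'

lemma IsSignedPerm.nodup_abs {w : List ℤ} (h : IsSignedPerm w) : (w.map abs).Nodup := by
  have : w.map abs = (w.map Int.natAbs).map (fun n : ℕ => (n : ℤ)) := by simp
  rw [this]
  exact h.nodup.map Nat.cast_injective

/-- If an interval is listed with all of `l₁` below all of `l₂`, then `l₁` and `l₂` list its two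
halves. Compare the sorted rearrangements. -/
lemma perm_split {l₁ l₂ : List ℕ} {s : ℕ} (h : (l₁ ++ l₂).Perm (List.range' s (l₁ ++ l₂).length))
    (hlt : ∀ x ∈ l₁, ∀ y ∈ l₂, x < y) :
    l₁.Perm (List.range' s l₁.length) ∧ l₂.Perm (List.range' (s + l₁.length) l₂.length) := by
  have p₁ := List.mergeSort_perm l₁ (fun a b => decide (a ≤ b))
  have p₂ := List.mergeSort_perm l₂ (fun a b => decide (a ≤ b))
  have sorted : ∀ l : List ℕ, (l.mergeSort (fun a b => decide (a ≤ b))).Pairwise (· ≤ ·) := by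
    intro l
    have := List.pairwise_mergeSort (le := fun a b : ℕ => decide (a ≤ b))
      (fun a b c => by simp; omega) (fun a b => by simp; omega) l
    simpa using this
  have e : l₁.mergeSort (fun a b => decide (a ≤ b)) ++ l₂.mergeSort (fun a b => decide (a ≤ b)) =
      List.range' s l₁.length ++ List.range' (s + l₁.length) l₂.length := by
    rw [List.range'_append_1, ← List.length_append]
    refine List.Perm.eq_of_pairwise (le := (· ≤ ·)) (fun a b _ _ => le_antisymm) ?_ ?_
      ((p₁.append p₂).trans h)
    · refine List.pairwise_append.2 ⟨sorted l₁, sorted l₂, fun x hx y hy => ?_⟩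
      exact (hlt x (p₁.subset hx) y (p₂.subset hy)).le
    · exact (List.pairwise_lt_range' (s := s)).imp le_of_lt
  obtain ⟨e₁, e₂⟩ := List.append_inj e (by simp)
  exact ⟨e₁ ▸ p₁.symm, e₂ ▸ p₂.symm⟩

lemma signedPerm_append_shift {u v : List ℤ} (hu : IsSignedPerm u) (hv : IsSignedPerm v) :
    IsSignedPerm (u ++ v.map (shift u.length)) := by
  have e : (v.map (shift u.length)).map Int.natAbs =
      (v.map Int.natAbs).map (u.length + ·) := by
    rw [List.map_map, List.map_map]
    exact List.map_congr_left fun x hx => natAbs_shift (hv.ne_zero hx)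
  unfold IsSignedPerm
  rw [List.map_append, e, List.length_append, List.length_map, ← List.range'_append_1]
  refine hu.append ?_
  rw [Nat.add_comm 1, ← List.map_add_range']
  exact hv.map _

lemma lt_shift {u v : List ℤ} (hu : IsSignedPerm u) (hv : IsSignedPerm v) :
    ∀ x ∈ u, ∀ y ∈ v.map (shift u.length), |x| < |y| := by
  intro x hx y hy
  obtain ⟨z, hz, rfl⟩ := List.mem_map.1 hy
  have h1 := hu.natAbs_mem hx
  have h2 := hv.natAbs_mem hz
  have h3 := natAbs_shift (k := u.length) (hv.ne_zero hz)
  simp only [Int.abs_eq_natAbs]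
  omega

/-- Every cut of a signed permutation exhibits it as a direct sum of signed permutations. -/
lemma signedPerm_split {a b : List ℤ} (h : IsSignedPerm (a ++ b))
    (hab : ∀ x ∈ a, ∀ y ∈ b, |x| < |y|) :
    IsSignedPerm a ∧ ∃ v, IsSignedPerm v ∧ b = v.map (shift a.length) := by
  unfold IsSignedPerm at h
  rw [List.map_append] at h
  obtain ⟨h1, h2⟩ := perm_split (s := 1) (l₁ := a.map Int.natAbs) (l₂ := b.map Int.natAbs)
    (by simpa using h) (by
      simp only [List.mem_map]
      rintro _ ⟨x, hx, rfl⟩ _ ⟨y, hy, rfl⟩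
      simpa only [Int.abs_eq_natAbs, Nat.cast_lt] using hab x hx y hy)
  simp only [List.length_map] at h1 h2
  have hb : ∀ x ∈ b, a.length < x.natAbs := by
    intro x hx
    have := h2.subset (List.mem_map_of_mem hx)
    simp only [List.mem_range'_1] at this
    omega
  have e : b = (b.map (unshift a.length)).map (shift a.length) := by
    rw [List.map_map]
    conv_lhs => rw [← List.map_id b]
    exact List.map_congr_left fun x hx => (shift_unshift (hb x hx)).symm
  refine ⟨h1, b.map (unshift a.length), ?_, e⟩
  unfold IsSignedPerm
  rw [List.length_map]
  have e2 : b.map Int.natAbs =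
      ((b.map (unshift a.length)).map Int.natAbs).map (a.length + ·) := by
    conv_lhs => rw [e]
    rw [List.map_map (l := b.map (unshift a.length)),
      List.map_map (l := b.map (unshift a.length))]
    refine List.map_congr_left fun x hx => ?_
    obtain ⟨y, hy, rfl⟩ := List.mem_map.1 hx
    refine natAbs_shift fun h0 => ?_
    have h3 := hb y hy
    have h4 := shift_unshift h3
    rw [h0, shift_zero] at h4
    omega
  rw [e2, Nat.add_comm 1, ← List.map_add_range'] at h2
  exact (List.map_perm_map_iff (add_right_injective a.length)).1 h2

/-! ### Splitting off the first component -/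

/-- Separability, phrased through absolute values: letters of different sign occur in increasing
order of absolute value, and the absolute values avoid `3142` and `2413`. The predicate `P`
restricts the allowed signs, so that `P = (· = 1)` gives separable permutations and
`P = fun _ => True` gives separable signed permutations. -/
def Good (P : ℤ → Prop) (w : List ℤ) : Prop :=
  (∀ x ∈ w, P x.sign) ∧ w.Pairwise (fun x y => x.sign ≠ y.sign → |x| < |y|) ∧ Avoid abs w

lemma good_append {P : ℤ → Prop} {a b : List ℤ} (hab : ∀ x ∈ a, ∀ y ∈ b, |x| < |y|) :
    Good P (a ++ b) ↔ Good P a ∧ Good P b := by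
  unfold Good
  rw [avoid_append hab, List.pairwise_append, List.forall_mem_append]
  have : ∀ x ∈ a, ∀ y ∈ b, x.sign ≠ y.sign → |x| < |y| := fun x hx y hy _ => hab x hx y hy
  tauto

lemma good_shift {P : ℤ → Prop} {k : ℕ} {w : List ℤ} :
    Good P (w.map (shift k)) ↔ Good P w := by
  unfold Good
  rw [avoid_map (abs_shift_lt k), List.pairwise_map, List.forall_mem_map]
  simp only [sign_shift, abs_shift_lt]

/-- The signed permutations of length `n` satisfying `Good P`. -/
def Cls (P : ℤ → Prop) (n : ℕ) : Set (List ℤ) :=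
  {w | w.length = n ∧ IsSignedPerm w ∧ Good P w}

/-- The members of `Cls P n` that are not direct sums of shorter ones. -/
def Irr (P : ℤ → Prop) (n : ℕ) : Set (List ℤ) :=
  {w | w ∈ Cls P n ∧ ¬ Dec abs w}

lemma finite_cls (P : ℤ → Prop) (n : ℕ) : (Cls P n).Finite := by
  have hfin : Finite (Set.Icc (-(n : ℤ)) n) := (Set.finite_Icc _ _).to_subtype
  refine ((List.finite_length_eq (Set.Icc (-(n : ℤ)) n) n).image
    (List.map Subtype.val)).subset ?_
  rintro w ⟨hl, hp, -⟩
  have hw : ∀ x ∈ w, x ∈ Set.Icc (-(n : ℤ)) n := by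
    intro x hx
    have := hp.natAbs_mem hx
    rw [Set.mem_Icc]
    omega
  refine ⟨w.attach.map (fun x => ⟨x.1, hw x.1 x.2⟩), by simpa using hl, ?_⟩
  rw [List.map_map]
  exact List.attach_map_subtype_val w

lemma finite_irr (P : ℤ → Prop) (n : ℕ) : (Irr P n).Finite :=
  (finite_cls P n).subset fun _ h => h.1

/-- Splitting off the first direct-sum component. -/
lemma card_cls_succ (P : ℤ → Prop) (n : ℕ) :
    Nat.card (Cls P (n + 1)) =
      ∑ k ∈ Finset.range (n + 1), Nat.card (Irr P (k + 1)) * Nat.card (Cls P (n - k)) := by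
  have hc : ∀ m, Finite (Cls P m) := fun m => (finite_cls P m).to_subtype
  have hi : ∀ m, Finite (Irr P m) := fun m => (finite_irr P m).to_subtype
  have hmem : ∀ (k : Fin (n + 1)) (u v : List ℤ), u ∈ Irr P (k + 1) → v ∈ Cls P (n - k) →
      u ++ v.map (shift u.length) ∈ Cls P (n + 1) := by
    rintro k u v ⟨⟨hul, hup, hug⟩, -⟩ ⟨hvl, hvp, hvg⟩
    refine ⟨?_, signedPerm_append_shift hup hvp, ?_⟩
    · have := k.2
      simp
      omega
    · exact (good_append (lt_shift hup hvp)).2 ⟨hug, good_shift.2 hvg⟩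
  let F : (Σ k : Fin (n + 1), Irr P (k + 1) × Cls P (n - k)) → Cls P (n + 1) :=
    fun q => ⟨q.2.1.1 ++ q.2.2.1.map (shift q.2.1.1.length), hmem q.1 _ _ q.2.1.2 q.2.2.2⟩
  -- A first component cannot be a proper prefix of another one: it would be a cut of the latter.
  have hle : ∀ u v u' v' : List ℤ, u ≠ [] → IsSignedPerm u → IsSignedPerm v →
      ¬ Dec abs u' → u ++ v.map (shift u.length) = u' ++ v' → u'.length ≤ u.length := by
    intro u v u' v' hu hup hvp hd e
    by_contra! hlt
    have hpre : u <+: u' := by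
      refine List.prefix_of_prefix_length_le (l₃ := u' ++ v') ⟨_, e⟩ ⟨_, rfl⟩ hlt.le
    obtain ⟨t, rfl⟩ := hpre
    rw [List.append_assoc, List.append_cancel_left_eq] at e
    refine hd ⟨u, t, hu, ?_, rfl, fun x hx y hy => lt_shift hup hvp x hx y ?_⟩
    · rintro rfl
      simp at hlt
    · rw [e]
      simp [hy]
  have hF : Function.Bijective F := by
    constructor
    · rintro ⟨k, ⟨u, hu⟩, ⟨v, hv⟩⟩ ⟨k', ⟨u', hu'⟩, ⟨v', hv'⟩⟩ e₀
      have e : u ++ v.map (shift u.length) = u' ++ v'.map (shift u'.length) :=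
        congrArg Subtype.val e₀
      have hne : ∀ {k : ℕ} {u : List ℤ}, u ∈ Irr P (k + 1) → u ≠ [] := by
        rintro k u h rfl
        simpa using h.1.1
      have hl : u.length = u'.length :=
        le_antisymm (hle _ _ _ _ (hne hu') hu'.1.2.1 hv'.2.1 hu.2 e.symm)
          (hle _ _ _ _ (hne hu) hu.1.2.1 hv.2.1 hu'.2 e)
      obtain rfl : k = k' := by
        have h1 := hu.1.1
        have h2 := hu'.1.1
        apply Fin.ext
        omega
      obtain ⟨rfl, e2⟩ := List.append_inj e hl
      obtain rfl := List.map_injective_iff.2 (shift_injective _) e2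
      rfl
    · rintro ⟨w, hwl, hwp, hwg⟩
      have hw : w ≠ [] := by
        rintro rfl
        simp at hwl
      obtain ⟨a, b, ha, rfl, hd, hab⟩ := exists_first abs _ w le_rfl hw
      obtain ⟨hap, v, hvp, rfl⟩ := signedPerm_split hwp hab
      obtain ⟨hag, hvg⟩ := (good_append hab).1 hwg
      have hpos := List.length_pos_iff.2 ha
      simp only [List.length_append, List.length_map] at hwl
      refine ⟨⟨⟨a.length - 1, by omega⟩, ⟨a, ⟨?_, hap, hag⟩, hd⟩,
        ⟨v, ?_, hvp, good_shift.1 hvg⟩⟩, rfl⟩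
      · simp only
        omega
      · simp only
        omega
  rw [← Nat.card_congr (Equiv.ofBijective F hF), Nat.card_sigma,
    ← Fin.sum_univ_eq_sum_range
      (fun k => Nat.card (Irr P (k + 1)) * Nat.card (Cls P (n - k))) (n + 1)]
  exact Finset.sum_congr rfl fun k _ => Nat.card_prod _ _

/-! ### Pattern containment in terms of absolute values -/

/-- The number of letters of `l` of smaller absolute value than `x`. -/
def rk (l : List ℤ) (x : ℤ) : ℕ := (l.filter (fun y => decide (|y| < |x|))).length

lemma lt_of_rk_lt {l : List ℤ} {x y : ℤ} (h : rk l x < rk l y) : |x| < |y| := by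
  by_contra! hle
  refine absurd h (not_lt.2 ?_)
  refine (List.monotone_filter_right l fun z hz => ?_).length_le
  simp only [decide_eq_true_eq] at hz ⊢
  exact hz.trans_le hle

lemma sts_eq (l : List ℤ) : sts l = l.map (fun x => x.sign * ((rk l x : ℤ) + 1)) := rfl

/-- An entry of `sts l` determines the sign and the rank of the corresponding letter. -/
lemma sign_mul_eq {x c : ℤ} {k : ℕ} (h : x.sign * ((k : ℤ) + 1) = c) (hc : c ≠ 0) :
    c.natAbs = k + 1 ∧ x.sign = c.sign := by
  rcases lt_trichotomy x 0 with hx | rfl | hx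
  · rw [Int.sign_eq_neg_one_of_neg hx] at h ⊢
    have : c < 0 := by omega
    rw [Int.sign_eq_neg_one_of_neg this]
    omega
  · simp at h
    omega
  · rw [Int.sign_eq_one_of_pos hx] at h ⊢
    have : 0 < c := by omega
    rw [Int.sign_eq_one_of_pos this]
    omega

lemma lt_of_sts {l : List ℤ} {x y a b : ℤ} (hx : x.sign * ((rk l x : ℤ) + 1) = a)
    (hy : y.sign * ((rk l y : ℤ) + 1) = b) (ha : a ≠ 0) (hab : a.natAbs < b.natAbs) :
    |x| < |y| := by
  have h1 := (sign_mul_eq hx ha).1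
  have h2 := (sign_mul_eq hy (by omega)).1
  exact lt_of_rk_lt (l := l) (by omega)

/-- The displayed equations determine signs and relative absolute values, by `sign_mul_eq` and
`lt_of_sts`. -/
lemma sts_pair {s : List ℤ} {a b : ℤ} (h : sts s = [a, b]) :
    ∃ x y, s = [x, y] ∧ x.sign * ((rk s x : ℤ) + 1) = a ∧ y.sign * ((rk s y : ℤ) + 1) = b := by
  have hl : s.length = 2 := by simpa [sts] using congrArg List.length h
  obtain ⟨x, y, rfl⟩ := List.length_eq_two.1 hl
  simp only [sts_eq, List.map_cons, List.map_nil, List.cons.injEq, and_true] at h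
  exact ⟨x, y, rfl, h⟩

lemma sts_quad {s : List ℤ} {a b c d : ℤ} (h : sts s = [a, b, c, d]) :
    ∃ p q r t, s = [p, q, r, t] ∧ p.sign * ((rk s p : ℤ) + 1) = a ∧
      q.sign * ((rk s q : ℤ) + 1) = b ∧ r.sign * ((rk s r : ℤ) + 1) = c ∧
      t.sign * ((rk s t : ℤ) + 1) = d := by
  have hl : s.length = 4 := by simpa [sts] using congrArg List.length h
  rcases s with _ | ⟨p, _ | ⟨q, _ | ⟨r, _ | ⟨t, _ | ⟨u, s⟩⟩⟩⟩⟩ <;> simp at hl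
  simp only [sts_eq, List.map_cons, List.map_nil, List.cons.injEq, and_true] at h
  exact ⟨p, q, r, t, rfl, h⟩

lemma Avoid.not_containsB {w : List ℤ} (h : Avoid abs w) (ε : ℤ) (hε : ε = 1 ∨ ε = -1) :
    ¬ ContainsB w [ε * 3, ε * 1, ε * 4, ε * 2] ∧ ¬ ContainsB w [ε * 2, ε * 4, ε * 1, ε * 3] := by
  constructor
  · rintro ⟨s, hs, e⟩
    obtain ⟨p, q, r, t, rfl, hp, hq, hr, ht⟩ := sts_quad e
    exact (h p q r t hs).1 ⟨lt_of_sts hq ht (by omega) (by omega),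
      lt_of_sts ht hp (by omega) (by omega), lt_of_sts hp hr (by omega) (by omega)⟩
  · rintro ⟨s, hs, e⟩
    obtain ⟨p, q, r, t, rfl, hp, hq, hr, ht⟩ := sts_quad e
    exact (h p q r t hs).2 ⟨lt_of_sts hr hp (by omega) (by omega),
      lt_of_sts hp ht (by omega) (by omega), lt_of_sts ht hq (by omega) (by omega)⟩

lemma rk_quad {a b c d : ℤ} (h₁ : |a| < |b|) (h₂ : |b| < |c|) (h₃ : |c| < |d|) {l : List ℤ}
    (hl : l.Perm [a, b, c, d]) :
    rk l a = 0 ∧ rk l b = 1 ∧ rk l c = 2 ∧ rk l d = 3 := by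
  have key : ∀ x, rk l x = rk [a, b, c, d] x := fun x => (hl.filter _).length_eq
  simp only [key]
  simp [rk, h₁, h₂, h₃, h₁.trans h₂, h₂.trans h₃, (h₁.trans h₂).trans h₃,
    h₁.not_gt, h₂.not_gt, h₃.not_gt, (h₁.trans h₂).not_gt, (h₂.trans h₃).not_gt,
    ((h₁.trans h₂).trans h₃).not_gt]

/-- If letters of opposite sign increase in absolute value, then avoiding the constant-sign versions
of `3142` and `2413`, for the signs that occur in the word, forces the absolute values to avoid both
patterns: each pattern has a connected inversion graph, so every occurrence has constant sign. -/
lemma avoid_of_not_containsB {w : List ℤ} (h0 : ∀ x ∈ w, x ≠ 0)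
    (hpw : w.Pairwise (fun x y => x.sign ≠ y.sign → |x| < |y|))
    (h : ∀ ε : ℤ, ((∃ x ∈ w, x.sign = ε) ∧ (ε = 1 ∨ ε = -1)) →
      ¬ ContainsB w [ε * 3, ε * 1, ε * 4, ε * 2] ∧ ¬ ContainsB w [ε * 2, ε * 4, ε * 1, ε * 3]) :
    Avoid abs w := by
  intro p q r s hs
  have hsgn : p.sign = 1 ∨ p.sign = -1 := by
    rcases lt_or_gt_of_ne (h0 p (hs.subset (by simp))) with hp | hp
    · exact Or.inr (Int.sign_eq_neg_one_of_neg hp)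
    · exact Or.inl (Int.sign_eq_one_of_pos hp)
  have hε := h p.sign ⟨⟨p, hs.subset (by simp), rfl⟩, hsgn⟩
  have hpair := hpw.sublist hs
  simp only [List.pairwise_cons, List.mem_cons, List.not_mem_nil, or_false, forall_eq_or_imp,
    forall_eq] at hpair
  obtain ⟨⟨hpq, hpr, hps⟩, ⟨hqr, hqs⟩, hrs, -⟩ := hpair
  constructor
  · rintro ⟨h1, h2, h3⟩
    have e1 : p.sign = q.sign := by
      by_contra hne
      exact (hpq hne).not_gt (h1.trans h2)
    have e2 : p.sign = s.sign := by
      by_contra hne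
      exact (hps hne).not_gt h2
    have e3 : r.sign = s.sign := by
      by_contra hne
      exact (hrs hne).not_gt (h2.trans h3)
    refine hε.1 ⟨_, hs, ?_⟩
    obtain ⟨k1, k2, k3, k4⟩ := rk_quad h1 h2 h3 (l := [p, q, r, s])
      (by
        refine List.perm_iff_count.2 fun x => ?_
        simp only [List.count_cons, List.count_nil]
        omega)
    simp only [sts_eq, List.map_cons, List.map_nil, k1, k2, k3, k4, e3, ← e1, ← e2]
    norm_num
  · rintro ⟨h1, h2, h3⟩
    have e1 : p.sign = r.sign := by
      by_contra hne
      exact (hpr hne).not_gt h1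
    have e2 : q.sign = r.sign := by
      by_contra hne
      exact (hqr hne).not_gt ((h1.trans h2).trans h3)
    have e3 : q.sign = s.sign := by
      by_contra hne
      exact (hqs hne).not_gt h3
    refine hε.2 ⟨_, hs, ?_⟩
    obtain ⟨k1, k2, k3, k4⟩ := rk_quad h1 h2 h3 (l := [p, q, r, s])
      (by
        refine List.perm_iff_count.2 fun x => ?_
        simp only [List.count_cons, List.count_nil]
        omega)
    simp only [sts_eq, List.map_cons, List.map_nil, k1, k2, k3, k4, ← e3, e2, ← e1]
    norm_num

lemma isSepB_iff {w : List ℤ} : IsSepB w ↔ IsSignedPerm w ∧ Good (fun _ => True) w := by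
  constructor
  · rintro ⟨hp, h1, h2, h3, h4, h5, h6⟩
    have hpw : w.Pairwise (fun x y => x.sign ≠ y.sign → |x| < |y|) := by
      rw [List.pairwise_iff_forall_sublist]
      intro x y hs hne
      by_contra! hle
      have habs : |x| ≠ |y| := by simpa using hp.nodup_abs.sublist (hs.map abs)
      have hlt : |y| < |x| := lt_of_le_of_ne hle habs.symm
      have hr : rk [x, y] x = 1 ∧ rk [x, y] y = 0 := by
        simp [rk, hlt, hlt.not_gt]
      rcases lt_or_gt_of_ne (hp.ne_zero (hs.subset (by simp) : x ∈ w)) with hx | hx <;>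
        rcases lt_or_gt_of_ne (hp.ne_zero (hs.subset (by simp) : y ∈ w)) with hy | hy
      · exact hne (by rw [Int.sign_eq_neg_one_of_neg hx, Int.sign_eq_neg_one_of_neg hy])
      · refine h1 ⟨_, hs, ?_⟩
        simp [sts_eq, hr, Int.sign_eq_neg_one_of_neg hx, Int.sign_eq_one_of_pos hy]
      · refine h2 ⟨_, hs, ?_⟩
        simp [sts_eq, hr, Int.sign_eq_neg_one_of_neg hy, Int.sign_eq_one_of_pos hx]
      · exact hne (by rw [Int.sign_eq_one_of_pos hx, Int.sign_eq_one_of_pos hy])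
    refine ⟨hp, fun _ _ => trivial, hpw,
      avoid_of_not_containsB (fun x => hp.ne_zero) hpw ?_⟩
    rintro ε ⟨-, rfl | rfl⟩
    · exact ⟨by simpa using h3, by simpa using h4⟩
    · exact ⟨by simpa using h5, by simpa using h6⟩
  · rintro ⟨hp, -, hpw, hav⟩
    rw [List.pairwise_iff_forall_sublist] at hpw
    refine ⟨hp, ?_, ?_, ?_⟩
    · rintro ⟨s, hs, e⟩
      obtain ⟨x, y, rfl, hx, hy⟩ := sts_pair e
      refine (hpw hs ?_).not_gt (lt_of_sts hy hx (by omega) (by omega))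
      rw [(sign_mul_eq hx (by omega)).2, (sign_mul_eq hy (by omega)).2]
      decide
    · rintro ⟨s, hs, e⟩
      obtain ⟨x, y, rfl, hx, hy⟩ := sts_pair e
      refine (hpw hs ?_).not_gt (lt_of_sts hy hx (by omega) (by omega))
      rw [(sign_mul_eq hx (by omega)).2, (sign_mul_eq hy (by omega)).2]
      decide
    · have h1 := hav.not_containsB 1 (Or.inl rfl)
      have h2 := hav.not_containsB (-1) (Or.inr rfl)
      norm_num at h1 h2
      exact ⟨h1.1, h1.2, h2.1, h2.2⟩

lemma st_eq_sts {s : List ℤ} (h : ∀ x ∈ s, 0 < x) : st s = sts s := by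
  refine List.map_congr_left fun x hx => ?_
  rw [Int.sign_eq_one_of_pos (h x hx), one_mul]
  congr 3
  refine List.filter_congr fun y hy => ?_
  rw [abs_of_pos (h x hx), abs_of_pos (h y hy)]

lemma containsA_iff {w u : List ℤ} (h : ∀ x ∈ w, 0 < x) : ContainsA w u ↔ ContainsB w u := by
  refine exists_congr fun s => and_congr_right fun hs => ?_
  rw [st_eq_sts fun x hx => h x (hs.subset hx)]

lemma pairwise_of_sign_eq {w : List ℤ} {ε : ℤ} (h : ∀ x ∈ w, x.sign = ε) :
    w.Pairwise (fun x y => x.sign ≠ y.sign → |x| < |y|) :=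
  List.pairwise_of_forall_mem_list fun x hx y hy hne => (hne ((h x hx).trans (h y hy).symm)).elim

lemma isSepA_iff {w : List ℤ} : IsSepA w ↔ IsSignedPerm w ∧ Good (· = 1) w := by
  constructor
  · rintro ⟨hp, hpos, h1, h2⟩
    rw [containsA_iff hpos] at h1 h2
    have hs : ∀ x ∈ w, x.sign = 1 := fun x hx => Int.sign_eq_one_of_pos (hpos x hx)
    refine ⟨hp, hs, pairwise_of_sign_eq hs,
      avoid_of_not_containsB (fun x => hp.ne_zero) (pairwise_of_sign_eq hs) ?_⟩
    rintro ε ⟨⟨x, hx, rfl⟩, -⟩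
    rw [hs x hx]
    exact ⟨by simpa using h1, by simpa using h2⟩
  · rintro ⟨hp, hs, -, hav⟩
    have hpos : ∀ x ∈ w, 0 < x := fun x hx => Int.sign_eq_one_iff_pos.1 (hs x hx)
    have h1 := hav.not_containsB 1 (Or.inl rfl)
    norm_num at h1
    refine ⟨hp, hpos, ?_⟩
    rw [containsA_iff hpos, containsA_iff hpos]
    exact h1

/-! ### Counting sum-irreducible words -/

/-- A sum-irreducible word has constant sign: the end of its initial constant-sign run is a cut. -/
lemma sign_const {P : ℤ → Prop} {x : ℤ} {w : List ℤ} (hg : Good P w) (hd : ¬ Dec abs w)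
    (hx : w.head? = some x) : ∀ y ∈ w, y.sign = x.sign := by
  set p : ℤ → Bool := fun y => decide (y.sign = x.sign) with hp
  have e : w.takeWhile p ++ w.dropWhile p = w := List.takeWhile_append_dropWhile
  have ha : ∀ y ∈ w.takeWhile p, y.sign = x.sign := fun y hy => by
    simpa [hp] using List.mem_takeWhile_imp hy
  have hne : w.takeWhile p ≠ [] := by
    rcases w with _ | ⟨z, t⟩
    · simp at hx
    · obtain rfl : z = x := by simpa using hx
      simp [hp]
  rcases hb : w.dropWhile p with _ | ⟨y, b⟩
  · rw [hb, List.append_nil] at e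
    rwa [e] at ha
  exfalso
  have hy : y.sign ≠ x.sign := by
    have hnil : w.dropWhile p ≠ [] := by rw [hb]; simp
    have hhead : (w.dropWhile p).head hnil = y := by simp only [hb, List.head_cons]
    have := List.head_dropWhile_not p hnil
    rw [hhead] at this
    simpa [hp] using this
  have hpw := hg.2.1
  rw [← e, hb, List.pairwise_append, List.pairwise_cons] at hpw
  refine hd ⟨_, y :: b, hne, by simp, by rw [← hb, e], fun u hu v hv => ?_⟩
  -- A letter with the sign of the run is compared with the run through `y`.
  by_cases hvs : v.sign = x.sign
  · rcases List.mem_cons.1 hv with rfl | hv'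
    · exact (hy hvs).elim
    · exact (hpw.2.2 u hu y (by simp) (by rw [ha u hu]; exact hy.symm)).trans
        (hpw.2.1.1 v hv' (by rw [hvs]; exact hy))
  · exact hpw.2.2 u hu v hv (by rw [ha u hu]; exact Ne.symm hvs)

lemma good_neg {w : List ℤ} :
    Good (fun _ => True) (w.map fun x => -x) ↔ Good (fun _ => True) w := by
  unfold Good
  rw [avoid_map (h := abs) (by simp), List.pairwise_map]
  simp

lemma signedPerm_neg {w : List ℤ} : IsSignedPerm (w.map fun x => -x) ↔ IsSignedPerm w := by
  have e : Int.natAbs ∘ (fun x : ℤ => -x) = Int.natAbs := by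
    funext x
    simp
  unfold IsSignedPerm
  rw [List.map_map, e, List.length_map]

/-- A sum-irreducible separable signed permutation is a sum-irreducible separable permutation with
one of the two signs. -/
lemma card_irr_signed (k : ℕ) :
    Nat.card (Irr (fun _ => True) (k + 1)) = 2 * Nat.card (Irr (· = 1) (k + 1)) := by
  have hup : ∀ u ∈ Irr (· = 1) (k + 1), u ∈ Irr (fun _ => True) (k + 1) :=
    fun u hu => ⟨⟨hu.1.1, hu.1.2.1, fun _ _ => trivial, hu.1.2.2.2⟩, hu.2⟩
  have hneg : ∀ u ∈ Irr (fun _ => True) (k + 1),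
      u.map (fun x => -x) ∈ Irr (fun _ => True) (k + 1) := by
    rintro u ⟨⟨hl, hp, hg⟩, hd⟩
    exact ⟨⟨by simpa using hl, signedPerm_neg.2 hp, good_neg.2 hg⟩,
      fun h => hd ((dec_map (h := abs) (by simp)).1 h)⟩
  let F : Bool × Irr (· = 1) (k + 1) → Irr (fun _ => True) (k + 1) := fun q =>
    if q.1 then ⟨q.2.1, hup _ q.2.2⟩ else ⟨q.2.1.map (fun x => -x), hneg _ (hup _ q.2.2)⟩
  have hdis : ∀ u ∈ Irr (· = 1) (k + 1), ∀ v ∈ Irr (· = 1) (k + 1),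
      u ≠ v.map (fun x => -x) := by
    rintro u hu v hv rfl
    rcases v with _ | ⟨x, v⟩
    · simpa using hv.1.1
    · have h1 := hu.1.2.2.1 (-x) (by simp)
      have h2 := hv.1.2.2.1 x (by simp)
      rw [Int.sign_neg, h2] at h1
      omega
  have hF : Function.Bijective F := by
    constructor
    · rintro ⟨b, u, hu⟩ ⟨b', u', hu'⟩ e
      have e := congrArg Subtype.val e
      rcases b <;> rcases b' <;> simp only [F, if_true, if_false, Bool.false_eq_true] at e
      · obtain rfl := List.map_injective_iff.2 neg_injective e
        rfl
      · exact (hdis _ hu' _ hu e.symm).elim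
      · exact (hdis _ hu _ hu' e).elim
      · subst e
        rfl
    · rintro ⟨w, hw⟩
      obtain ⟨x, hx⟩ : ∃ x, w.head? = some x := by
        rcases w with _ | ⟨x, t⟩
        · simpa using hw.1.1
        · exact ⟨x, rfl⟩
      have hs := sign_const hw.1.2.2 hw.2 hx
      rcases lt_or_gt_of_ne (hw.1.2.1.ne_zero (List.mem_of_head? hx)) with h | h
      · rw [Int.sign_eq_neg_one_of_neg h] at hs
        have hw' := hneg w hw
        refine ⟨⟨false, w.map (fun x => -x), ⟨hw'.1.1, hw'.1.2.1, ?_, hw'.1.2.2.2⟩, hw'.2⟩, ?_⟩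
        · simp only [List.mem_map]
          rintro _ ⟨y, hy, rfl⟩
          rw [Int.sign_neg, hs y hy, neg_neg]
        · apply Subtype.ext
          simp [F]
      · rw [Int.sign_eq_one_of_pos h] at hs
        exact ⟨⟨true, w, ⟨hw.1.1, hw.1.2.1, hs, hw.1.2.2.2⟩, hw.2⟩, by simp [F]⟩
  rw [← Nat.card_congr (Equiv.ofBijective F hF), Nat.card_prod]
  simp

/-- Reversal exchanges direct sums and skew sums, so exactly half of the separable permutations of
a given length at least two are sum-irreducible. -/
lemma card_cls_eq_two_mul (k : ℕ) :
    Nat.card (Cls (· = 1) (k + 2)) = 2 * Nat.card (Irr (· = 1) (k + 2)) := by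
  have hrev : ∀ u ∈ Cls (· = 1) (k + 2), u.reverse ∈ Cls (· = 1) (k + 2) := by
    rintro u ⟨hl, hp, hs, -, hav⟩
    have hs' : ∀ x ∈ u.reverse, x.sign = 1 := fun x hx => hs x (List.mem_reverse.1 hx)
    refine ⟨by simpa using hl, ?_, hs', pairwise_of_sign_eq hs', avoid_reverse hav⟩
    unfold IsSignedPerm
    rw [List.map_reverse, List.length_reverse]
    exact (List.reverse_perm _).trans hp
  have hor : ∀ u ∈ Cls (· = 1) (k + 2), Dec abs u ∨ Dec abs u.reverse := by
    rintro u ⟨hl, hp, -, -, hav⟩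
    rw [dec_reverse]
    exact dec_or_dec _ abs u le_rfl (by omega) hp.nodup_abs hav
  let F : Bool × Irr (· = 1) (k + 2) → Cls (· = 1) (k + 2) := fun q =>
    if q.1 then ⟨q.2.1, q.2.2.1⟩ else ⟨q.2.1.reverse, hrev _ q.2.2.1⟩
  have hdis : ∀ u ∈ Irr (· = 1) (k + 2), ∀ v ∈ Irr (· = 1) (k + 2), u ≠ v.reverse := by
    rintro u hu v hv rfl
    rcases hor v hv.1 with h | h
    · exact hv.2 h
    · exact hu.2 h
  have hF : Function.Bijective F := by
    constructor
    · rintro ⟨b, u, hu⟩ ⟨b', u', hu'⟩ e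
      have e := congrArg Subtype.val e
      rcases b <;> rcases b' <;> simp only [F, if_true, if_false, Bool.false_eq_true] at e
      · obtain rfl := List.reverse_injective e
        rfl
      · exact (hdis _ hu' _ hu e.symm).elim
      · exact (hdis _ hu _ hu' e).elim
      · subst e
        rfl
    · rintro ⟨w, hw⟩
      by_cases hd : Dec abs w
      · exact ⟨⟨false, w.reverse, hrev w hw, fun h => not_dec_both hd (dec_reverse.1 h)⟩,
          by simp [F]⟩
      · exact ⟨⟨true, w, hw, hd⟩, by simp [F]⟩
  rw [← Nat.card_congr (Equiv.ofBijective F hF), Nat.card_prod]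
  simp

/-! ### Solving the recurrences -/

lemma avoid_of_length_lt {f : ℤ → ℤ} {w : List ℤ} (h : w.length < 4) : Avoid f w := by
  intro p q r s hs
  have := hs.length_le
  simp at this
  omega

lemma card_cls_zero (P : ℤ → Prop) : Nat.card (Cls P 0) = 1 := by
  have : Cls P 0 = {[]} := by
    ext w
    constructor
    · rintro ⟨hl, -⟩
      simpa using hl
    · rintro rfl
      exact ⟨rfl, by simp [IsSignedPerm], by simp, by simp, avoid_of_length_lt (by simp)⟩
  rw [this]
  simp

lemma card_cls_one : Nat.card (Cls (· = 1) 1) = 1 := by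
  have : Cls (· = 1) 1 = {[1]} := by
    ext w
    constructor
    · rintro ⟨hl, hp, hs, -⟩
      obtain ⟨x, rfl⟩ := List.length_eq_one_iff.1 hl
      have h1 := hp.natAbs_mem (x := x) (by simp)
      have h2 := Int.sign_eq_one_iff_pos.1 (hs x (by simp))
      simp only [List.length_cons, List.length_nil] at h1
      have : x = 1 := by omega
      simp [this]
    · rintro rfl
      exact ⟨rfl, by simp [IsSignedPerm], by simp, by simp, avoid_of_length_lt (by simp)⟩
  rw [this]
  simp

/-- The arithmetic of the two block recurrences: `i k` counts irreducible blocks of size `k`, `s n`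
sequences of blocks of total size `n`, and `b n` such sequences with a sign on each block. Since
`2 * i m = s m` for `m ≥ 2` and `i 1 = s 1 = 1`, both recurrences turn into the one for the large
Schröder numbers. -/
lemma schroeder_of_recurrences {r s b i : ℕ → ℕ} (hr0 : r 0 = 1)
    (hrec : ∀ m : ℕ, r (m + 1) = r m + ∑ k ∈ Finset.range (m + 1), r k * r (m - k))
    (hs0 : s 0 = 1) (hs1 : s 1 = 1) (hb0 : b 0 = 1) (hi : ∀ k, s (k + 2) = 2 * i (k + 2))
    (hs : ∀ n, s (n + 1) = ∑ k ∈ Finset.range (n + 1), i (k + 1) * s (n - k))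
    (hb : ∀ n, b (n + 1) = ∑ k ∈ Finset.range (n + 1), 2 * i (k + 1) * b (n - k)) (n : ℕ) :
    s (n + 1) = r n ∧ b n = r n := by
  have hi1 : i 1 = 1 := by simpa [hs0, hs1] using (hs 0).symm
  have hsum : ∀ (f : ℕ → ℕ) (n : ℕ),
      ∑ k ∈ Finset.range (n + 1), 2 * i (k + 1) * f k =
        f 0 + ∑ k ∈ Finset.range (n + 1), s (k + 1) * f k := by
    intro f n
    rw [Finset.sum_range_succ', Finset.sum_range_succ' (fun k => s (k + 1) * f k)]
    simp only [hi, zero_add, hi1, hs1]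
    ring
  have hsr : ∀ n, s (n + 1) = r n := by
    intro n
    induction n using Nat.strong_induction_on with
    | _ n ih =>
      rcases n with _ | n
      · rw [hs1, hr0]
      · have h1 := hs (n + 1)
        rw [Finset.sum_range_succ, Nat.sub_self, hs0, mul_one] at h1
        have h2 := hi n
        have h3 := hsum (fun k => s (n + 1 - k)) n
        have h4 : ∑ k ∈ Finset.range (n + 1), 2 * i (k + 1) * s (n + 1 - k) =
            2 * ∑ k ∈ Finset.range (n + 1), i (k + 1) * s (n + 1 - k) := by
          rw [Finset.mul_sum]
          exact Finset.sum_congr rfl fun k _ => by ring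
        have h5 : ∑ k ∈ Finset.range (n + 1), s (k + 1) * s (n + 1 - k) =
            ∑ k ∈ Finset.range (n + 1), r k * r (n - k) := by
          refine Finset.sum_congr rfl fun k hk => ?_
          have hk := Finset.mem_range.1 hk
          rw [ih k hk, show n + 1 - k = (n - k) + 1 by omega, ih (n - k) (by omega)]
        have h6 : s (n + 1 - 0) = r n := ih n (by omega)
        rw [hrec, ← h5, ← h6]
        have e : n + 1 + 1 = n + 2 := rfl
        rw [e] at h1 ⊢
        omega
  refine ⟨hsr n, ?_⟩
  induction n using Nat.strong_induction_on with
  | _ n ih =>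
    rcases n with _ | n
    · rw [hb0, hr0]
    · rw [hb, hsum (fun k => b (n - k)), hrec]
      rw [Nat.sub_zero, ih n (by omega)]
      congr 1
      refine Finset.sum_congr rfl fun k hk => ?_
      rw [hsr, ih (n - k) (by omega)]

/-- `#K(B_n)` is the `n`-th large Schröder number (given by the
recurrence `r₀ = 1`, `r_{m+1} = r_m + Σ_{k=0}^m r_k r_{m-k}`), and equals
`#K(S_{n+1})`. -/
theorem card_sep_signed_eq_schroeder (n : ℕ) (r : ℕ → ℕ) (hr0 : r 0 = 1)
    (hrec : ∀ m : ℕ, r (m + 1) = r m + ∑ k ∈ Finset.range (m + 1), r k * r (m - k)) :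
    Nat.card {w : List ℤ | w.length = n ∧ IsSepB w} = r n ∧
    Nat.card {w : List ℤ | w.length = n ∧ IsSepB w} =
      Nat.card {w : List ℤ | w.length = n + 1 ∧ IsSepA w} := by
  have hB : ∀ n, {w : List ℤ | w.length = n ∧ IsSepB w} = Cls (fun _ => True) n := by
    intro n
    ext w
    simp only [Set.mem_ofPred_eq, Cls, isSepB_iff]
  have hA : ∀ n, {w : List ℤ | w.length = n ∧ IsSepA w} = Cls (· = 1) n := by
    intro n
    ext w
    simp only [Set.mem_ofPred_eq, Cls, isSepA_iff]
  rw [hB, hA]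
  have h := schroeder_of_recurrences (i := fun k => Nat.card (Irr (· = 1) k))
    (s := fun k => Nat.card (Cls (· = 1) k)) (b := fun k => Nat.card (Cls (fun _ => True) k))
    hr0 hrec (card_cls_zero _) card_cls_one (card_cls_zero _) card_cls_eq_two_mul
    (card_cls_succ _) (fun n => by simp only [← card_irr_signed]; exact card_cls_succ _ n) n
  exact ⟨h.2, h.2.trans h.1.symm⟩

end

end SepPaperFormal
end

section
/- For every w ∈ K(S_{n+1}), one has w = st(0 · φ_n(w)), where 0 · u denotes the word of length n+1 obtained by prepending the letter 0 to the one-line notation of u ∈ B_n, and st denotes standardization of a word of distinct integers. -/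
/-!
Call a word `w` standard when `st w = w`; permutations are standard. Two facts about
standardization drive the proof. First, `st` only depends on relative order (`st_map`). Second,
if every letter of `a` is smaller than every letter of `b`, then
`st (a ++ b)` is `st a` followed by `st b` raised by `|a|` (`st_append_lt`), and symmetrically
when every letter of `a` is larger (`st_append_gt`).

The theorem follows by induction along the recursion for `φ`, carrying the extra information
that every letter of `u = φ(w)` has absolute value at most `|u| = |w| - 1`. At a global ascent
(descent) `p` of a standard `w`, the second block appended to `φ` of the first block consists of
letters which are positive (negative) of absolute value at least `p`, in the same relative order
as the second block of `w`. So prepending `0` to the image gives a word that splits at `p`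
exactly as `w` does, and the two standardizations agree block by block.
-/

namespace SepPaperFormal

noncomputable section

open Polynomial

theorem length_st (a : List ℤ) : (st a).length = a.length := by simp [st]

theorem st_map (f : ℤ → ℤ) (a : List ℤ) (h : ∀ x ∈ a, ∀ y ∈ a, (f x < f y ↔ x < y)) :
    st (a.map f) = st a := by
  unfold st
  rw [List.map_map]
  apply List.map_congr_left
  intro x hx
  have : (a.map f).filter (fun y => decide (y < f x))
      = (a.filter (fun y => decide (y < x))).map f := by
    rw [List.filter_map]
    congr 1
    apply List.filter_congr
    intro y hy
    simp [h y hy x hx]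
  simp [this]

theorem st_st (a : List ℤ) : st (st a) = st a := by
  conv_lhs => rw [st.eq_1 a]
  apply st_map
  -- the rank function `x ↦ #{y ∈ a | y < x} + 1` is strictly monotone on the letters of `a`
  have mono : ∀ x y : ℤ, x ≤ y → (a.filter (fun z => decide (z < x))).length
      ≤ (a.filter (fun z => decide (z < y))).length := by
    intro x y h
    apply List.Sublist.length_le
    apply List.monotone_filter_right
    intro z
    simp only [decide_eq_true_eq]
    omega
  have smono : ∀ x ∈ a, ∀ y : ℤ, x < y → (a.filter (fun z => decide (z < x))).length
      < (a.filter (fun z => decide (z < y))).length := by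
    intro x hx y h
    have hs : (a.filter (fun z => decide (z < x))).Sublist
        (a.filter (fun z => decide (z < y))) := by
      apply List.monotone_filter_right
      intro z
      simp only [decide_eq_true_eq]
      omega
    refine lt_of_le_of_ne hs.length_le fun he => ?_
    have hmem : x ∈ a.filter (fun z => decide (z < y)) := by simp [hx, h]
    rw [← hs.eq_of_length he] at hmem
    simp at hmem
  intro x hx y _
  constructor
  · intro h
    by_contra hn
    have := mono y x (by omega)
    omega
  · intro h
    have := smono x hx y h
    omega

theorem st_bounds (a : List ℤ) : ∀ x ∈ st a, 1 ≤ x ∧ x ≤ (a.length : ℤ) := by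
  intro x hx
  simp only [st, List.mem_map] at hx
  obtain ⟨y, hy, rfl⟩ := hx
  have : (a.filter (fun z => decide (z < y))).length < a.length := by
    rw [List.length_filter_lt_length_iff_exists]
    exact ⟨y, hy, by simp⟩
  omega

theorem st_append_lt (a b : List ℤ) (h : ∀ x ∈ a, ∀ y ∈ b, x < y) :
    st (a ++ b) = st a ++ (st b).map (fun x => x + (a.length : ℤ)) := by
  simp only [st, List.map_append, List.map_map, List.filter_append, List.length_append]
  congr 1
  · apply List.map_congr_left
    intro x hx
    have : b.filter (fun y => decide (y < x)) = [] := by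
      rw [List.filter_eq_nil_iff]
      intro y hy
      have := h x hx y hy
      simp only [decide_eq_true_eq]
      omega
    simp [this]
  · apply List.map_congr_left
    intro x hx
    have : a.filter (fun y => decide (y < x)) = a := by
      rw [List.filter_eq_self]
      intro y hy
      simpa using h y hy x hx
    simp only [this, Function.comp]
    push_cast
    ring

theorem st_append_gt (a b : List ℤ) (h : ∀ x ∈ a, ∀ y ∈ b, y < x) :
    st (a ++ b) = (st a).map (fun x => x + (b.length : ℤ)) ++ st b := by
  simp only [st, List.map_append, List.map_map, List.filter_append, List.length_append]
  congr 1
  · apply List.map_congr_left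
    intro x hx
    have : b.filter (fun y => decide (y < x)) = b := by
      rw [List.filter_eq_self]
      intro y hy
      simpa using h x hx y hy
    simp only [this, Function.comp]
    push_cast
    ring
  · apply List.map_congr_left
    intro x hx
    have : a.filter (fun y => decide (y < x)) = [] := by
      rw [List.filter_eq_nil_iff]
      intro y hy
      have := h y hy x hx
      simp only [decide_eq_true_eq]
      omega
    simp [this]

theorem length_filter_lt_range' (n x : ℕ) (h1 : 1 ≤ x) (h2 : x ≤ n) :
    ((List.range' 1 n).filter (fun y => decide (y < x))).length + 1 = x := by
  have e : List.range' 1 n = List.range' 1 (x - 1) ++ List.range' x (n - (x - 1)) := by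
    have := List.range'_append_1 (s := 1) (m := x - 1) (n := n - (x - 1))
    rw [show 1 + (x - 1) = x by omega, show x - 1 + (n - (x - 1)) = n by omega] at this
    exact this.symm
  rw [e, List.filter_append, List.filter_eq_self.2, List.filter_eq_nil_iff.2]
  · simp
    omega
  · intro y hy
    simp [List.mem_range'_1] at hy ⊢
    omega
  · intro y hy
    simp [List.mem_range'_1] at hy ⊢
    omega

theorem st_eq_self_of_perm (w : List ℤ) (h : IsSignedPerm w) (hpos : ∀ x ∈ w, 0 < x) :
    st w = w := by
  unfold IsSignedPerm at h
  conv_rhs => rw [← List.map_id w]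
  unfold st
  apply List.map_congr_left
  intro x hx
  have hmem : x.natAbs ∈ List.range' 1 w.length :=
    h.subset (List.mem_map.2 ⟨x, hx, rfl⟩)
  rw [List.mem_range'_1] at hmem
  have hp := (h.filter (fun y => decide (y < x.natAbs))).length_eq
  rw [List.filter_map, List.length_map] at hp
  have hc : w.filter ((fun y => decide (y < x.natAbs)) ∘ Int.natAbs)
      = w.filter (fun y => decide (y < x)) := by
    apply List.filter_congr
    intro y hy
    have := hpos x hx
    have := hpos y hy
    simp only [Function.comp, decide_eq_decide]
    omega
  have := length_filter_lt_range' w.length x.natAbs (by omega) (by omega)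
  have := hpos x hx
  rw [hc] at hp
  simp only [id]
  omega

theorem forall_take_drop (R : ℤ → ℤ → Prop) (w : List ℤ) (p : ℕ)
    (h : ∀ i j, i < p → p ≤ j → j < w.length → R w[i]! w[j]!) :
    ∀ x ∈ w.take p, ∀ y ∈ w.drop p, R x y := by
  intro x hx y hy
  obtain ⟨i, hi, rfl⟩ := List.mem_iff_getElem.1 hx
  obtain ⟨j, hj, rfl⟩ := List.mem_iff_getElem.1 hy
  simp only [List.length_take, List.length_drop] at hi hj
  have := h i (p + j) (by omega) (by omega) (by omega)
  rw [getElem!_pos w i (by omega), getElem!_pos w (p + j) (by omega)] at this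
  simpa using this

/-- The inductive form of the theorem. Standardness `st w = w` passes to the block on which `φ`
recurses, and the bound on the letters of `u` separates `0 :: u` from the block appended
to `u`. -/
theorem phiRel_invariant {w u : List ℤ} (hphi : PhiRel w u) (hw : st w = w) :
    u.length + 1 = w.length ∧ (∀ x ∈ u, |x| ≤ (u.length : ℤ)) ∧ w = st (0 :: u) := by
  induction hphi with
  | base => simp [st]
  | gasc w u p hp1 hp2 h _ ih =>
    have hlt := forall_take_drop (· < ·) w p h
    have hlenT : (w.take p).length = p := by simp; omega
    have hlenD : (w.drop p).length = w.length - p := by simp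
    have hsplit := st_append_lt _ _ hlt
    rw [List.take_append_drop, hw, hlenT] at hsplit
    have hT : st (w.take p) = w.take p := by
      conv_rhs => rw [hsplit]
      rw [List.take_left' (by rw [length_st, hlenT])]
    obtain ⟨hl, hb, he⟩ := ih hT
    have hB := st_bounds (w.drop p)
    rw [hlenT] at hl
    rw [hlenD] at hB
    -- the letters of the appended block are positive, hence all shifted by `+|u|`
    have hv : (st (w.drop p)).map (fun x => x + x.sign * (u.length : ℤ))
        = (st (w.drop p)).map (fun x => x + (u.length : ℤ)) := by
      apply List.map_congr_left
      intro x hx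
      rw [Int.sign_eq_one_of_pos (by have := hB x hx; omega), one_mul]
    simp only [oplus, hv]
    refine ⟨?_, ?_, ?_⟩
    · simp [length_st]; omega
    · intro x hx
      simp only [List.length_append, List.length_map, length_st, hlenD]
      rw [List.mem_append, List.mem_map] at hx
      rw [abs_le]
      rcases hx with hx | ⟨y, hy, rfl⟩
      · have := abs_le.1 (hb x hx)
        omega
      · have := hB y hy
        omega
    · rw [← List.cons_append, st_append_lt, st_map, st_st, ← he, List.length_cons, hl, ← hT]
      · exact hsplit
      · intro x _ y _
        omega
      · intro x hx y hy
        rw [List.mem_map] at hy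
        obtain ⟨y, hy, rfl⟩ := hy
        have := hB y hy
        rcases List.mem_cons.1 hx with rfl | hx
        · omega
        · have := abs_le.1 (hb x hx)
          omega
  | gdes w u p hp1 hp2 h _ ih =>
    have hgt := forall_take_drop (fun x y => y < x) w p h
    have hlenT : (w.take p).length = p := by simp; omega
    have hlenD : (w.drop p).length = w.length - p := by simp
    have hsplit := st_append_gt _ _ hgt
    rw [List.take_append_drop, hw, hlenD] at hsplit
    have hD : st (w.drop p) = w.drop p := by
      conv_rhs => rw [hsplit]
      rw [List.drop_left' (by rw [List.length_map, length_st, hlenT])]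
    obtain ⟨hl, hb, he⟩ := ih (st_st _)
    have hB := st_bounds (w.drop p)
    rw [hD, hlenD] at hB
    rw [length_st, hlenT] at hl
    -- the letters of the appended block are negative, hence all shifted by `-|u|`
    have hv : ((w.drop p).map (fun x => x - ((w.length - p : ℕ) : ℤ) - 1)).map
          (fun x => x + x.sign * (u.length : ℤ))
        = (w.drop p).map (fun x => x - ((w.length - p : ℕ) : ℤ) - 1 - (u.length : ℤ)) := by
      rw [List.map_map]
      apply List.map_congr_left
      intro x hx
      simp only [Function.comp]
      rw [Int.sign_eq_neg_one_of_neg (by have := hB x hx; omega)]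
      ring
    simp only [oplus, hv]
    refine ⟨?_, ?_, ?_⟩
    · simp; omega
    · intro x hx
      simp only [List.length_append, List.length_map, hlenD]
      rw [List.mem_append, List.mem_map] at hx
      rw [abs_le]
      rcases hx with hx | ⟨y, hy, rfl⟩
      · have := abs_le.1 (hb x hx)
        omega
      · have := hB y hy
        omega
    · rw [← List.cons_append, st_append_gt, st_map, ← he, List.length_map, hlenD]
      · exact hsplit
      · intro x _ y _
        omega
      · intro x hx y hy
        rw [List.mem_map] at hy
        obtain ⟨y, hy, rfl⟩ := hy
        have := hB y hy
        rcases List.mem_cons.1 hx with rfl | hx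
        · omega
        · have := abs_le.1 (hb x hx)
          omega

/-- For every `w ∈ K(S_{n+1})`, `w = st(0 · φ_n(w))`. -/
theorem eq_st_zero_cons_phi (n : ℕ) (w u : List ℤ)
    (hw : w.length = n + 1) (hsep : IsSepA w) (hphi : PhiRel w u) :
    w = st ((0 : ℤ) :: u) := by
  exact (phiRel_invariant hphi (st_eq_self_of_perm w hsep.1 hsep.2.1)).2.2

end

end SepPaperFormal
end
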